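/- arXiv:2507.17030 — 3 statements merged into one kernel-verified Lean document; each statement's English description precedes it below -/
import Mathlib

section
/- Let p and q be Borel probability measures on ℝ^D, let θ_l ∈ ℝ^D be fixed, and let φ : ℝ^D → ℝ^m be measurable. Define B_r = {θ ∈ ℝ^D : ‖φ(θ) − φ(θ_l)‖₂ ≤ r} and assume the function r ↦ q(B_r) is continuous. Define the ball probability rank U_q(θ*) = q({θ : ‖φ(θ) − φ(θ_l)‖₂ ≤ ‖φ(θ*) − φ(θ_l)‖₂}). Then the following are equivalent: (i) p(B_r) = q(B_r) for all r ≥ 0; (ii) when θ* ∼ p, the random variable U_q(θ*) is uniformly distributed on [0,1], i.e., p({θ* : U_q(θ*) ≤ u}) = u for every u ∈ [0,1]. -/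
open MeasureTheory
open scoped ENNReal

/-- **Ball probability equivalence (Theorem 2).** For Borel probability measures `p`
and `q` on ℝ^D, a fixed reference point `θl`, and a measurable embedding `φ`, with
`B_r = {θ | ‖φ θ - φ θl‖ ≤ r}` and `r ↦ q(B_r)` continuous, the following are
equivalent: (i) `p(B_r) = q(B_r)` for all `r ≥ 0`; (ii) the ball probability rank
`U_q(θ*) = q {θ | ‖φ θ - φ θl‖ ≤ ‖φ θ* - φ θl‖}` is uniformly distributed on `[0,1]`
when `θ* ∼ p`. -/
theorem ball_probability_equivalence
    (D m : ℕ)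
    (p q : Measure (EuclideanSpace ℝ (Fin D)))
    [IsProbabilityMeasure p] [IsProbabilityMeasure q]
    (θl : EuclideanSpace ℝ (Fin D))
    (φ : EuclideanSpace ℝ (Fin D) → EuclideanSpace ℝ (Fin m))
    (hφ_meas : Measurable φ)
    (hcont : Continuous fun r : ℝ =>
      q {θ : EuclideanSpace ℝ (Fin D) | ‖φ θ - φ θl‖ ≤ r}) :
    (∀ r : ℝ, 0 ≤ r →
        p {θ : EuclideanSpace ℝ (Fin D) | ‖φ θ - φ θl‖ ≤ r}
          = q {θ : EuclideanSpace ℝ (Fin D) | ‖φ θ - φ θl‖ ≤ r})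
      ↔
    (∀ u : ℝ≥0∞, u ≤ 1 →
        p {θs : EuclideanSpace ℝ (Fin D) |
            q {θ : EuclideanSpace ℝ (Fin D) | ‖φ θ - φ θl‖ ≤ ‖φ θs - φ θl‖} ≤ u} = u) := by
  have hmono : ∀ {a b : ℝ}, a ≤ b →
      {θ : EuclideanSpace ℝ (Fin D) | ‖φ θ - φ θl‖ ≤ a} ⊆ {θ | ‖φ θ - φ θl‖ ≤ b} :=
    fun hab θ hθ => le_trans hθ hab
  have hneg : ∀ r : ℝ, r < 0 →
      {θ : EuclideanSpace ℝ (Fin D) | ‖φ θ - φ θl‖ ≤ r} = ∅ := by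
    intro r hr
    ext θ
    simp only [Set.mem_setOf_eq, Set.mem_empty_iff_false, iff_false, not_le]
    exact lt_of_lt_of_le hr (norm_nonneg _)
  constructor
  · intro h
    have h' : ∀ r : ℝ, p {θ : EuclideanSpace ℝ (Fin D) | ‖φ θ - φ θl‖ ≤ r}
          = q {θ : EuclideanSpace ℝ (Fin D) | ‖φ θ - φ θl‖ ≤ r} := by
      intro r
      rcases le_or_gt 0 r with hr | hr
      · exact h r hr
      · rw [hneg r hr]; simp
    have hlim : Filter.Tendsto
        (fun n : ℕ => q {θ : EuclideanSpace ℝ (Fin D) | ‖φ θ - φ θl‖ ≤ (n : ℝ)})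
        Filter.atTop (nhds 1) := by
      have hU : (⋃ n : ℕ, {θ : EuclideanSpace ℝ (Fin D) | ‖φ θ - φ θl‖ ≤ (n : ℝ)})
          = Set.univ := by
        ext θ
        simpa using exists_nat_ge ‖φ θ - φ θl‖
      have := tendsto_measure_iUnion_atTop (μ := q)
        (s := fun n : ℕ => {θ : EuclideanSpace ℝ (Fin D) | ‖φ θ - φ θl‖ ≤ (n : ℝ)})
        (fun a b hab => hmono (Nat.cast_le.mpr hab))
      rw [hU, measure_univ] at this
      exact this
    have hivt : ∀ v : ℝ≥0∞, v < 1 → ∃ s : ℝ,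
        q {θ : EuclideanSpace ℝ (Fin D) | ‖φ θ - φ θl‖ ≤ s} = v := by
      intro v hv
      obtain ⟨n, hn⟩ := (hlim.eventually (lt_mem_nhds hv)).exists
      have hle : (-1 : ℝ) ≤ n := by
        have : (0 : ℝ) ≤ n := Nat.cast_nonneg n
        linarith
      have hmem := intermediate_value_Icc hle hcont.continuousOn
      obtain ⟨s, -, hs⟩ := hmem (show v ∈ Set.Icc _ _ from
        ⟨by simp only [hneg (-1) (by norm_num), measure_empty]; exact zero_le, hn.le⟩)
      exact ⟨s, hs⟩
    intro u hu
    rcases hu.eq_or_lt with rfl | hu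
    · have : {θs : EuclideanSpace ℝ (Fin D) |
            q {θ : EuclideanSpace ℝ (Fin D) | ‖φ θ - φ θl‖ ≤ ‖φ θs - φ θl‖} ≤ 1}
          = Set.univ := Set.eq_univ_of_forall fun θ => prob_le_one
      rw [this, measure_univ]
    · apply le_antisymm
      · apply le_of_forall_gt_imp_ge_of_dense
        intro v hv
        rcases lt_or_ge v 1 with hv1 | hv1
        · obtain ⟨s, hs⟩ := hivt v hv1
          rw [← hs, ← h' s]
          apply measure_mono
          intro θ hθ
          by_contra hc
          have hc' : s ≤ ‖φ θ - φ θl‖ := (not_le.mp hc).le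
          have h1 := measure_mono (μ := q) (hmono hc')
          rw [hs] at h1
          exact absurd (h1.trans hθ) (not_le.mpr hv)
        · exact prob_le_one.trans hv1
      · obtain ⟨s, hs⟩ := hivt u hu
        calc u = p {θ | ‖φ θ - φ θl‖ ≤ s} := by rw [h' s, hs]
          _ ≤ _ := measure_mono fun θ hθ => by
            have h1 := measure_mono (μ := q) (hmono (Set.mem_setOf_eq ▸ hθ))
            rw [hs] at h1
            exact h1
  · intro h r _
    apply le_antisymm
    · rw [← h (q {θ | ‖φ θ - φ θl‖ ≤ r}) prob_le_one]
      exact measure_mono fun θ hθ => measure_mono (hmono hθ)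
    · apply le_of_forall_lt_imp_le_of_dense
      intro v hv
      rw [← h v (hv.le.trans prob_le_one)]
      apply measure_mono
      intro θ hθ
      by_contra hc
      have hc' : r ≤ ‖φ θ - φ θl‖ := (not_le.mp hc).le
      exact absurd ((measure_mono (hmono hc')).trans hθ) (not_le.mpr hv)
end

section
/- Let p and q be Borel probability measures on ℝ^D, let θ_l ∈ ℝ^D be fixed, and let φ : ℝ^D → ℝ^m be measurable. Define B_r = {θ ∈ ℝ^D : ‖φ(θ) − φ(θ_l)‖₂ ≤ r} and assume r ↦ q(B_r) is continuous. Suppose the ball probability rank U_q(θ*) = q({θ : ‖φ(θ) − φ(θ_l)‖₂ ≤ ‖φ(θ*) − φ(θ_l)‖₂}) satisfies p({θ* : U_q(θ*) ≤ u}) = u for every u ∈ [0,1] (i.e., U_q(θ*) is uniform on [0,1] under θ* ∼ p). Then p(B_r) = q(B_r) for every r ≥ 0. -/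
open MeasureTheory
open scoped ENNReal

/-- **Converse direction of ball probability equivalence.** If the ball probability
rank `U_q(θ*) = q {θ | ‖φ θ - φ θl‖ ≤ ‖φ θ* - φ θl‖}` is uniformly distributed on
`[0,1]` when `θ* ∼ p`, where `r ↦ q(B_r)` is continuous, then `p(B_r) = q(B_r)` for
every radius `r ≥ 0`. -/
theorem ball_probability_converse
    (D m : ℕ)
    (p q : Measure (EuclideanSpace ℝ (Fin D)))
    [IsProbabilityMeasure p] [IsProbabilityMeasure q]
    (θl : EuclideanSpace ℝ (Fin D))
    (φ : EuclideanSpace ℝ (Fin D) → EuclideanSpace ℝ (Fin m))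
    (hφ_meas : Measurable φ)
    (hcont : Continuous fun r : ℝ =>
      q {θ : EuclideanSpace ℝ (Fin D) | ‖φ θ - φ θl‖ ≤ r})
    (huniform : ∀ u : ℝ≥0∞, u ≤ 1 →
        p {θs : EuclideanSpace ℝ (Fin D) |
            q {θ : EuclideanSpace ℝ (Fin D) | ‖φ θ - φ θl‖ ≤ ‖φ θs - φ θl‖} ≤ u} = u) :
    ∀ r : ℝ, 0 ≤ r →
      p {θ : EuclideanSpace ℝ (Fin D) | ‖φ θ - φ θl‖ ≤ r}
        = q {θ : EuclideanSpace ℝ (Fin D) | ‖φ θ - φ θl‖ ≤ r} := by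
  intro r _
  have hmono : ∀ a b : ℝ, a ≤ b → q {θ | ‖φ θ - φ θl‖ ≤ a} ≤ q {θ | ‖φ θ - φ θl‖ ≤ b} :=
    fun a b hab => measure_mono fun θ (h : ‖φ θ - φ θl‖ ≤ a) => le_trans h hab
  apply le_antisymm
  · calc _ ≤ p {θs | q {θ | ‖φ θ - φ θl‖ ≤ ‖φ θs - φ θl‖} ≤ q {θ | ‖φ θ - φ θl‖ ≤ r}} :=
          measure_mono fun θs hs => hmono _ _ hs
      _ = _ := huniform _ prob_le_one
  · refine le_of_forall_lt_imp_le_of_dense fun u hu => ?_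
    calc u = _ := (huniform u (hu.le.trans prob_le_one)).symm
      _ ≤ _ := measure_mono fun θs hs => by
        by_contra hc
        have hc' : r ≤ ‖φ θs - φ θl‖ := (not_le.mp hc).le
        exact absurd ((hmono _ _ hc').trans hs) (not_le.mpr hu)
end

section
/- Let q be a Borel probability measure on ℝ^D, let θ_l ∈ ℝ^D be fixed, and let φ : ℝ^D → ℝ^m be measurable. Define F_q(r) = q(B_r) where B_r = {θ : ‖φ(θ) − φ(θ_l)‖₂ ≤ r}, and assume F_q is continuous with F_q(0) = 0. Fix α ∈ [0,1) and set r_α = sup{r ≥ 0 : F_q(r) ≤ α}, which is finite since F_q(r) → 1 as r → ∞. Then the sublevel set of the ball probability rank satisfies the exact identity {θ* ∈ ℝ^D : U_q(θ*) ≤ α} = B_{r_α}, and moreover q(B_{r_α}) = α. Consequently, for any Borel probability measure p on ℝ^D, p({θ* : U_q(θ*) ≤ α}) − α = p(B_{r_α}) − q(B_{r_α}). -/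
open MeasureTheory
open scoped ENNReal

/-- **Sublevel sets of the ball probability rank are φ-balls.** Let `q` be a Borel
probability measure on ℝ^D, `θl` a reference point, `φ` measurable, and
`F_q(r) = q(B_r)` with `B_r = {θ | ‖φ θ - φ θl‖ ≤ r}`, assumed continuous with
`F_q(0) = 0`. For `α ∈ [0,1)`, set `r_α = sup {r ≥ 0 : F_q(r) ≤ α}` (finite since
`F_q(r) → 1`). Then `{θ* : U_q(θ*) ≤ α} = B_{r_α}` and `q(B_{r_α}) = α`; consequently,
for any Borel probability measure `p`,
`p({θ* : U_q(θ*) ≤ α}) − α = p(B_{r_α}) − q(B_{r_α})`. -/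
theorem rank_sublevel_is_ball
    (D m : ℕ)
    (q : Measure (EuclideanSpace ℝ (Fin D))) [IsProbabilityMeasure q]
    (θl : EuclideanSpace ℝ (Fin D))
    (φ : EuclideanSpace ℝ (Fin D) → EuclideanSpace ℝ (Fin m))
    (hφ_meas : Measurable φ)
    (B : ℝ → Set (EuclideanSpace ℝ (Fin D)))
    (hB : ∀ r : ℝ, B r = {θ : EuclideanSpace ℝ (Fin D) | ‖φ θ - φ θl‖ ≤ r})
    (hcont : Continuous fun r : ℝ => q (B r))
    (hzero : q (B 0) = 0)
    (α : ℝ≥0∞) (hα : α < 1)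
    (rα : ℝ) (hrα : rα = sSup {r : ℝ | 0 ≤ r ∧ q (B r) ≤ α}) :
    ({θs : EuclideanSpace ℝ (Fin D) |
        q {θ : EuclideanSpace ℝ (Fin D) | ‖φ θ - φ θl‖ ≤ ‖φ θs - φ θl‖} ≤ α} = B rα)
    ∧ q (B rα) = α
    ∧ (∀ p : Measure (EuclideanSpace ℝ (Fin D)), IsProbabilityMeasure p →
        (p {θs : EuclideanSpace ℝ (Fin D) |
            q {θ : EuclideanSpace ℝ (Fin D) | ‖φ θ - φ θl‖ ≤ ‖φ θs - φ θl‖} ≤ α}).toReal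
          - α.toReal
        = (p (B rα)).toReal - (q (B rα)).toReal) := by
  have hmono : Monotone B := by
    intro a b hab
    rw [hB, hB]
    intro θ hθ
    exact le_trans hθ hab
  have hlim : Filter.Tendsto (fun r : ℝ => q (B r)) Filter.atTop (nhds 1) := by
    have h := tendsto_measure_iUnion_atTop (μ := q) hmono
    have hU : (⋃ r, B r) = Set.univ := by
      ext θ
      simp only [Set.mem_iUnion, Set.mem_univ, iff_true]
      refine ⟨‖φ θ - φ θl‖, ?_⟩
      rw [hB]
      exact le_refl ‖φ θ - φ θl‖
    rw [hU, measure_univ] at h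
    exact h
  obtain ⟨R, hR⟩ := (hlim.eventually (lt_mem_nhds hα)).exists
  have hbdd : BddAbove {r : ℝ | 0 ≤ r ∧ q (B r) ≤ α} := by
    refine ⟨R, ?_⟩
    rintro r ⟨_, hr⟩
    by_contra hlt
    push Not at hlt
    exact absurd (hR.trans_le (measure_mono (hmono hlt.le))) (not_lt.mpr hr)
  have hne : {r : ℝ | 0 ≤ r ∧ q (B r) ≤ α}.Nonempty := ⟨0, le_refl _, by simp [hzero]⟩
  have hcl : IsClosed {r : ℝ | 0 ≤ r ∧ q (B r) ≤ α} :=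
    (isClosed_le continuous_const continuous_id).inter (isClosed_le hcont continuous_const)
  have hmem := hcl.csSup_mem hne hbdd
  rw [← hrα] at hmem
  have heq : q (B rα) = α := by
    refine le_antisymm hmem.2 ?_
    by_contra hlt
    push Not at hlt
    have hev := hcont.continuousAt.eventually (gt_mem_nhds hlt)
    obtain ⟨r, hr1, hr2⟩ :=
      ((hev.filter_mono nhdsWithin_le_nhds).and
        (self_mem_nhdsWithin : Set.Ioi rα ∈ nhdsWithin rα (Set.Ioi rα))).exists
    have hr2' : rα < r := hr2
    have := le_csSup hbdd (⟨hmem.1.trans hr2'.le, hr1.le⟩ : r ∈ {r : ℝ | 0 ≤ r ∧ q (B r) ≤ α})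
    rw [← hrα] at this
    linarith
  have hset : {θs : EuclideanSpace ℝ (Fin D) |
        q {θ : EuclideanSpace ℝ (Fin D) | ‖φ θ - φ θl‖ ≤ ‖φ θs - φ θl‖} ≤ α} = B rα := by
    ext θs
    rw [Set.mem_setOf_eq, ← hB]
    constructor
    · intro h
      have := le_csSup hbdd
        (⟨norm_nonneg _, h⟩ : ‖φ θs - φ θl‖ ∈ {r : ℝ | 0 ≤ r ∧ q (B r) ≤ α})
      rw [← hrα] at this
      rw [hB]
      exact this
    · intro h
      rw [hB] at h
      exact (measure_mono (hmono h)).trans hmem.2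
  refine ⟨hset, heq, ?_⟩
  intro p _
  rw [hset, heq]
end
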